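/- For every prime p and every natural number n ≥ 1, the Chermak-Delgado measure of the mod pⁿ Heisenberg group satisfies m*(𝓗(pⁿ)) = p^{4n}; that is, the maximum of |H| · |C(H)| over all subgroups H of 𝓗(pⁿ) equals p^{4n}. -/

import Mathlib

/-!
In a group of class two a commutator is multiplicative in each argument. If the derived subgroup is
moreover cyclic, embed it into `ℂˣ`: each `c` centralizing `H` gives a character `g ↦ ⁅c, g⁆` that
is trivial on `H`, and two such `c` give the same character exactly when they agree modulo the
centre. Distinct characters trivial on `H` are linearly independent functions on `G ⧸ H`, so there
are at most `|G : H|` of them. Hence `|C(H)| ≤ |Z(G)| * |G : H|`, that is,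
`|H| * |C(H)| ≤ |G| * |Z(G)|`, and `H = G` attains this bound.
-/

theorem pc_mem_ker_iff {G K : Type*} [Group G] [Group K] (q : G →* K) (s g : G) :
    s⁻¹ * g⁻¹ * s * g ∈ q.ker ↔ Commute (q s) (q g) := by
  rw [MonoidHom.mem_ker]
  simp only [map_mul, map_inv]
  rw [mul_assoc, ← mul_inv_rev, inv_mul_eq_one, commute_iff_eq]
  exact eq_comm

/-- The `q`-pseudocentralizer of a subset `S` of `G`:
all `g` such that `[s, g] = s⁻¹ * g⁻¹ * s * g ∈ ker q` for all `s ∈ S`. -/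
def pseudocentralizer {G K : Type*} [Group G] [Group K] (q : G →* K) (S : Set G) :
    Subgroup G where
  carrier := {g : G | ∀ s ∈ S, s⁻¹ * g⁻¹ * s * g ∈ q.ker}
  one_mem' := fun s _ => by
    rw [pc_mem_ker_iff, map_one]
    exact Commute.one_right _
  mul_mem' := fun {a b} ha hb s hs => by
    rw [pc_mem_ker_iff, map_mul]
    exact ((pc_mem_ker_iff q s a).mp (ha s hs)).mul_right ((pc_mem_ker_iff q s b).mp (hb s hs))
  inv_mem' := fun {a} ha s hs => by
    rw [pc_mem_ker_iff, map_inv]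
    exact ((pc_mem_ker_iff q s a).mp (ha s hs)).inv_right

theorem mem_pseudocentralizer_iff {G K : Type*} [Group G] [Group K] {q : G →* K} {S : Set G}
    {g : G} : g ∈ pseudocentralizer q S ↔ ∀ s ∈ S, s⁻¹ * g⁻¹ * s * g ∈ q.ker := Iff.rfl

/-- The mod `r` Heisenberg group, as triples `(x, y, z)` over `ZMod r`. -/
@[ext]
structure Heis (r : ℕ) where
  x : ZMod r
  y : ZMod r
  z : ZMod r

namespace Heis

variable {r : ℕ}

private def hmul (a b : Heis r) : Heis r := ⟨a.x + b.x, a.y + b.y + a.x * b.z, a.z + b.z⟩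
private def hone : Heis r := ⟨0, 0, 0⟩
private def hinv (a : Heis r) : Heis r := ⟨-a.x, a.x * a.z - a.y, -a.z⟩

instance : Group (Heis r) where
  mul := hmul
  one := hone
  inv := hinv
  mul_assoc a b c := by
    show hmul (hmul a b) c = hmul a (hmul b c)
    ext <;> (dsimp [hmul]; ring)
  one_mul a := by
    show hmul hone a = a
    ext <;> (dsimp [hmul, hone]; ring)
  mul_one a := by
    show hmul a hone = a
    ext <;> (dsimp [hmul, hone]; ring)
  inv_mul_cancel a := by
    show hmul (hinv a) a = hone
    ext <;> (dsimp [hmul, hinv, hone]; ring)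

@[simp] theorem mul_x (a b : Heis r) : (a * b).x = a.x + b.x := rfl
@[simp] theorem mul_y (a b : Heis r) : (a * b).y = a.y + b.y + a.x * b.z := rfl
@[simp] theorem mul_z (a b : Heis r) : (a * b).z = a.z + b.z := rfl
@[simp] theorem one_x : (1 : Heis r).x = 0 := rfl
@[simp] theorem one_y : (1 : Heis r).y = 0 := rfl
@[simp] theorem one_z : (1 : Heis r).z = 0 := rfl
@[simp] theorem inv_x (a : Heis r) : (a⁻¹).x = -a.x := rfl
@[simp] theorem inv_y (a : Heis r) : (a⁻¹).y = a.x * a.z - a.y := rfl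
@[simp] theorem inv_z (a : Heis r) : (a⁻¹).z = -a.z := rfl

/-- Componentwise reduction `Heis r → Heis s` when `s ∣ r`. -/
def heisMap {r s : ℕ} (h : s ∣ r) : Heis r →* Heis s where
  toFun a := ⟨ZMod.castHom h (ZMod s) a.x, ZMod.castHom h (ZMod s) a.y, ZMod.castHom h (ZMod s) a.z⟩
  map_one' := by
    ext <;> simp only [one_x, one_y, one_z, map_zero]
  map_mul' a b := by
    ext <;> simp only [mul_x, mul_y, mul_z, map_add, map_mul]

end Heis

/-- Componentwise reduction modulo `p ^ (n - 1)` from `Heis (p ^ n)` to `Heis (p ^ (n - 1))`. -/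
def heisQ (p n : ℕ) : Heis (p ^ n) →* Heis (p ^ (n - 1)) :=
  Heis.heisMap (pow_dvd_pow p (Nat.sub_le n 1))

/-- The Chermak-Delgado measure `m(H) = |H| * |C(H)|` of a subgroup. -/
noncomputable def chermakDelgadoMeasure {G : Type*} [Group G] (H : Subgroup G) : ℕ :=
  Nat.card H * Nat.card (Subgroup.centralizer (H : Set G))

section Characters

theorem natCard_monoidHom_le_index {G L : Type*} [Group G] [CommRing L] [IsDomain L]
    (H : Subgroup G) [H.FiniteIndex] (S : Set (G →* Lˣ)) (hS : ∀ f ∈ S, H ≤ f.ker) :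
    Nat.card S ≤ H.index := by
  let pullback : (G ⧸ H → L) →ₗ[L] G → L := LinearMap.funLeft L L (QuotientGroup.mk (s := H))
  have factors (f : S) : ∃ F : G ⧸ H → L, pullback F = fun g => (f.1 g : L) :=
    ⟨fun q => Quotient.liftOn' q (fun g => (f.1 g : L)) fun a b hab => by
      rw [f.1.eq_iff.mpr (hS f f.2 (QuotientGroup.leftRel_apply.mp hab))], rfl⟩
  choose F hF using factors
  have toMonoidHom_injective :
      Function.Injective fun f : S => (Units.coeHom L).comp f.1 := fun f g hfg =>
    Subtype.ext (MonoidHom.ext fun a => Units.ext (DFunLike.congr_fun hfg a))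
  have linearIndependent_pullback : LinearIndependent L (pullback ∘ F) := by
    convert (linearIndependent_monoidHom G L).comp _ toMonoidHom_injective using 1
    exact funext hF
  have linearIndependent_F : LinearIndependent L F := .of_comp pullback linearIndependent_pullback
  have : Fintype (G ⧸ H) := Fintype.ofFinite _
  have : Finite S := linearIndependent_F.finite
  have : Fintype S := Fintype.ofFinite _
  calc Nat.card S = Fintype.card S := Nat.card_eq_fintype_card
    _ ≤ Module.finrank L (G ⧸ H → L) := linearIndependent_F.fintype_card_le_finrank
    _ = H.index := by rw [Module.finrank_pi, ← Nat.card_eq_fintype_card, Subgroup.index]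

theorem exists_injective_units_of_isCyclic (K L : Type*) [Group K] [Finite K] [IsCyclic K]
    [CommMonoid L] [HasEnoughRootsOfUnity L (Nat.card K)] :
    ∃ χ : K →* Lˣ, Function.Injective χ := by
  have card_eq := (HasEnoughRootsOfUnity.natCard_rootsOfUnity L (Nat.card K)).symm
  exact ⟨(rootsOfUnity (Nat.card K) L).subtype.comp (mulEquivOfCyclicCardEq card_eq).toMonoidHom,
    Subtype.val_injective.comp (mulEquivOfCyclicCardEq card_eq).injective⟩

end Characters

section ClassTwo

open scoped commutatorElement

variable {G : Type*} [Group G]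

theorem commutatorElement_mul_left_of_le_center (hG : commutator G ≤ Subgroup.center G)
    (a b c : G) : ⁅a * b, c⁆ = ⁅a, c⁆ * ⁅b, c⁆ := by
  have hbc : ⁅b, c⁆ ∈ Subgroup.center G :=
    hG (Subgroup.commutator_mem_commutator (Subgroup.mem_top b) (Subgroup.mem_top c))
  have h := Subgroup.mem_center_iff.mp hbc
  rw [commutatorElement_mul_left_eq_conj_mul, h a, mul_inv_cancel_right, h]

theorem commutatorElement_mul_right_of_le_center (hG : commutator G ≤ Subgroup.center G)
    (a b c : G) : ⁅a, b * c⁆ = ⁅a, b⁆ * ⁅a, c⁆ := by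
  have hac : ⁅a, c⁆ ∈ Subgroup.center G :=
    hG (Subgroup.commutator_mem_commutator (Subgroup.mem_top a) (Subgroup.mem_top c))
  rw [commutatorElement_mul_right_eq_mul_conj, mul_assoc _ b, Subgroup.mem_center_iff.mp hac b,
    ← mul_assoc, mul_inv_cancel_right]

/-- The bimultiplicative pairing `(a, b) ↦ χ ⁅a, b⁆` on a group of class at most two, for `χ` a
homomorphism from the derived subgroup to a commutative group. -/
def commutatorPairing {M : Type*} [CommGroup M] (hG : commutator G ≤ Subgroup.center G)
    (χ : commutator G →* M) : G →* G →* M :=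
  MonoidHom.mk' (fun a => MonoidHom.mk' (fun b => χ ⟨⁅a, b⁆,
      Subgroup.commutator_mem_commutator (Subgroup.mem_top a) (Subgroup.mem_top b)⟩)
    fun b c => by
      rw [← map_mul]
      exact congrArg χ (Subtype.ext (commutatorElement_mul_right_of_le_center hG a b c)))
  fun a b => MonoidHom.ext fun c => by
    simp only [MonoidHom.mk'_apply, MonoidHom.mul_apply]
    rw [← map_mul]
    exact congrArg χ (Subtype.ext (commutatorElement_mul_left_of_le_center hG a b c))

theorem commutatorPairing_eq_one_iff {M : Type*} [CommGroup M]
    (hG : commutator G ≤ Subgroup.center G) {χ : commutator G →* M} (hχ : Function.Injective χ)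
    {a b : G} : commutatorPairing hG χ a b = 1 ↔ Commute a b :=
  (map_eq_one_iff χ hχ).trans
    (Subtype.ext_iff.trans commutatorElement_eq_one_iff_commute)

theorem ker_commutatorPairing {M : Type*} [CommGroup M]
    (hG : commutator G ≤ Subgroup.center G) {χ : commutator G →* M} (hχ : Function.Injective χ) :
    (commutatorPairing hG χ).ker = Subgroup.center G := by
  ext a
  simp only [MonoidHom.mem_ker, DFunLike.ext_iff, MonoidHom.one_apply,
    commutatorPairing_eq_one_iff hG hχ, Subgroup.mem_center_iff, commute_iff_eq, eq_comm]

theorem natCard_centralizer_le {L : Type*} [CommRing L] [IsDomain L]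
    (hG : commutator G ≤ Subgroup.center G) {χ : commutator G →* Lˣ} (hχ : Function.Injective χ)
    (H : Subgroup G) [H.FiniteIndex] :
    Nat.card (Subgroup.centralizer (H : Set G)) ≤ Nat.card (Subgroup.center G) * H.index := by
  set C := Subgroup.centralizer (H : Set G)
  have trivial_on_H : ∀ f ∈ C.map (commutatorPairing hG χ), H ≤ f.ker := by
    rintro _ ⟨c, hc, rfl⟩ h hh
    exact (commutatorPairing_eq_one_iff hG hχ).mpr (Subgroup.mem_centralizer_iff.mp hc h hh).symm
  calc Nat.card C
      = Nat.card (Subgroup.center G) * (Subgroup.center G).relIndex C := by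
        rw [← Subgroup.relIndex_bot_left, ← Subgroup.relIndex_bot_left,
          Subgroup.relIndex_mul_relIndex _ _ _ bot_le (Subgroup.center_le_centralizer _)]
    _ = Nat.card (Subgroup.center G) * Nat.card (C.map (commutatorPairing hG χ)) := by
        rw [← Subgroup.relIndex_ker, ker_commutatorPairing hG hχ]
    _ ≤ Nat.card (Subgroup.center G) * H.index :=
        Nat.mul_le_mul_left _ (natCard_monoidHom_le_index H _ trivial_on_H)

theorem chermakDelgadoMeasure_top :
    chermakDelgadoMeasure (⊤ : Subgroup G) = Nat.card G * Nat.card (Subgroup.center G) := by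
  rw [chermakDelgadoMeasure, Subgroup.coe_top, Subgroup.centralizer_univ, Subgroup.card_top]

theorem chermakDelgadoMeasure_le [Finite G] [IsCyclic (commutator G)]
    (hG : commutator G ≤ Subgroup.center G) (H : Subgroup G) :
    chermakDelgadoMeasure H ≤ Nat.card G * Nat.card (Subgroup.center G) := by
  obtain ⟨χ, hχ⟩ := exists_injective_units_of_isCyclic (commutator G) ℂ
  calc chermakDelgadoMeasure H
      ≤ Nat.card H * (Nat.card (Subgroup.center G) * H.index) :=
        Nat.mul_le_mul_left _ (natCard_centralizer_le hG hχ H)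
    _ = Nat.card H * H.index * Nat.card (Subgroup.center G) := by ring
    _ = Nat.card G * Nat.card (Subgroup.center G) := by rw [H.card_mul_index]

theorem isGreatest_chermakDelgadoMeasure [Finite G] [IsCyclic (commutator G)]
    (hG : commutator G ≤ Subgroup.center G) :
    IsGreatest (Set.range (chermakDelgadoMeasure (G := G)))
      (Nat.card G * Nat.card (Subgroup.center G)) :=
  ⟨⟨⊤, chermakDelgadoMeasure_top⟩, Set.forall_mem_range.mpr (chermakDelgadoMeasure_le hG)⟩

end ClassTwo

namespace Heis

/-- The coordinates of `Heis r`, used for counting its elements. -/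
def equivProd (r : ℕ) : Heis r ≃ ZMod r × ZMod r × ZMod r where
  toFun a := (a.x, a.y, a.z)
  invFun v := ⟨v.1, v.2.1, v.2.2⟩

instance (r : ℕ) [NeZero r] : Finite (Heis r) := .of_equiv _ (equivProd r).symm

theorem natCard (r : ℕ) : Nat.card (Heis r) = r ^ 3 := by
  rw [Nat.card_congr (equivProd r), Nat.card_prod, Nat.card_prod, Nat.card_zmod]
  ring

theorem commute_iff {r : ℕ} {a b : Heis r} : Commute a b ↔ a.x * b.z = b.x * a.z := by
  rw [commute_iff_eq, Heis.ext_iff]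
  simp only [mul_x, mul_y, mul_z, add_comm b.x, add_comm b.y, add_comm b.z, add_right_inj, true_and,
    and_true]

theorem mem_center_iff {r : ℕ} {a : Heis r} :
    a ∈ Subgroup.center (Heis r) ↔ a.x = 0 ∧ a.z = 0 := by
  simp only [Subgroup.mem_center_iff, ← commute_iff_eq, commute_iff]
  constructor
  · intro h
    exact ⟨by simpa using (h ⟨0, 0, 1⟩).symm, by simpa using h ⟨1, 0, 0⟩⟩
  · rintro ⟨hx, hz⟩ b
    rw [hx, hz, mul_zero, zero_mul]

theorem commutator_le_center (r : ℕ) : commutator (Heis r) ≤ Subgroup.center (Heis r) := by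
  refine Subgroup.commutator_le.mpr fun a _ b _ => mem_center_iff.mpr ?_
  simp [commutatorElement_def]

/-- The centre of `Heis r` is the additive group `ZMod r`, embedded as the triples `(0, y, 0)`. -/
def centerEquiv (r : ℕ) : Subgroup.center (Heis r) ≃* Multiplicative (ZMod r) where
  toFun a := .ofAdd a.1.y
  invFun y := ⟨⟨0, y.toAdd, 0⟩, mem_center_iff.mpr ⟨rfl, rfl⟩⟩
  left_inv a := by
    obtain ⟨hx, hz⟩ := mem_center_iff.mp a.2
    exact Subtype.ext (Heis.ext hx.symm rfl hz.symm)
  map_mul' a b := by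
    have hx : a.1.x = 0 := (mem_center_iff.mp a.2).1
    simp [hx]

theorem natCard_center (r : ℕ) : Nat.card (Subgroup.center (Heis r)) = r :=
  (Nat.card_congr (centerEquiv r).toEquiv).trans (Nat.card_zmod r)

instance (r : ℕ) : IsCyclic (Subgroup.center (Heis r)) :=
  isCyclic_of_injective (centerEquiv r).toMonoidHom (centerEquiv r).injective

instance (r : ℕ) : IsCyclic (commutator (Heis r)) :=
  Subgroup.isCyclic_of_le (commutator_le_center r)

end Heis

theorem statement19_general (r : ℕ) [NeZero r] :
    IsGreatest (Set.range (chermakDelgadoMeasure (G := Heis r))) (r ^ 4) := by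
  simpa only [Heis.natCard, Heis.natCard_center, ← pow_succ] using
    isGreatest_chermakDelgadoMeasure (Heis.commutator_le_center r)

/-- the Chermak-Delgado measure of `𝓗(pⁿ)` is `p^(4n)`: the maximum of
`|H| * |C(H)|` over all subgroups `H ≤ 𝓗(pⁿ)` equals `p^(4n)`. -/
theorem statement19 (p n : ℕ) (hp : p.Prime) (hn : 1 ≤ n) :
    IsGreatest (Set.range fun H : Subgroup (Heis (p ^ n)) =>
        Nat.card H * Nat.card (Subgroup.centralizer (H : Set (Heis (p ^ n)))))
      (p ^ (4 * n)) := by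
  have : NeZero (p ^ n) := ⟨pow_ne_zero n hp.ne_zero⟩
  rw [mul_comm, pow_mul]
  exact statement19_general (p ^ n)
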